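/- (Müntz–Szász theorem, continuous case) Let S be a subset of the nonnegative integers. The linear span of the monomials {xⁿ : n ∈ S} is dense in C[0,1] (with the supremum norm) if and only if 0 ∈ S and ∑_{n∈S} 1/(n+1) = ∞. -/

import Mathlib

open MeasureTheory Filter Topology

/-- The monomial `x ↦ xⁿ` as an element of `C([0,1], ℂ)`. -/
noncomputable def monC (n : ℕ) : C(Set.Icc (0 : ℝ) 1, ℂ) :=
  ⟨fun x => ((x : ℝ) : ℂ) ^ n, by fun_prop⟩

section Polynomials

open Polynomial

theorem Polynomial.exists_coeff_eq_mul {A : Type*} [Semiring A] (P : A[X]) (c : ℕ → A) :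
    ∃ R : A[X], ∀ k, R.coeff k = c k * P.coeff k := by
  refine ⟨∑ k ∈ P.support, monomial k (c k * P.coeff k), fun k => ?_⟩
  simp +contextual [coeff_monomial]

theorem Polynomial.coeff_X_mul_derivative {A : Type*} [CommSemiring A] (R : A[X]) (k : ℕ) :
    (X * derivative R).coeff k = k * R.coeff k := by
  cases k with
  | zero => simp
  | succ k => rw [coeff_X_mul, coeff_derivative]; push_cast; ring

/-- A maximum principle for the first-order operator `R ↦ l R - x R'` on `[0,1]`. -/
theorem Polynomial.mul_abs_eval_le_of_abs_le {R : ℝ[X]} {l B : ℝ} (hl : 0 < l)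
    (h0 : R.eval 0 = 0) (h1 : R.eval 1 = 0)
    (hB : ∀ x ∈ Set.Icc (0 : ℝ) 1, |l * R.eval x - x * R.derivative.eval x| ≤ B)
    {x : ℝ} (hx : x ∈ Set.Icc (0 : ℝ) 1) : l * |R.eval x| ≤ B := by
  have hB0 : 0 ≤ B := (abs_nonneg _).trans (hB x hx)
  obtain ⟨y, hy, hmax⟩ := isCompact_Icc.exists_isMaxOn (Set.nonempty_of_mem hx)
    ((R ^ 2).continuous.continuousOn (s := Set.Icc (0 : ℝ) 1))
  have hxy : |R.eval x| ≤ |R.eval y| := by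
    have := hmax hx
    simp only [eval_pow, Set.mem_ofPred_eq] at this
    exact sq_le_sq.mp this
  refine (mul_le_mul_of_nonneg_left hxy hl.le).trans ?_
  by_cases hRy : R.eval y = 0
  · simpa [hRy] using hB0
  have hy' : y ∈ Set.Ioo (0 : ℝ) 1 := by
    refine ⟨lt_of_le_of_ne hy.1 ?_, lt_of_le_of_ne hy.2 ?_⟩
    · rintro rfl; exact hRy h0
    · rintro rfl; exact hRy h1
  have hd : (derivative (R ^ 2)).eval y = 0 :=
    (hmax.isLocalMax (Icc_mem_nhds hy'.1 hy'.2)).hasDerivAt_eq_zero ((R ^ 2).hasDerivAt y)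
  have hd' : R.derivative.eval y = 0 := by
    simpa [derivative_pow, hRy] using hd
  simpa [hd', abs_mul, abs_of_pos hl] using hB y hy

/-- Von Golitschek's approximation of `x ^ m` by powers larger than `m`. -/
theorem exists_polynomial_abs_eval_le_exp {m : ℕ} (hm : 0 < m) (F : Finset ℕ)
    (hF : ∀ k ∈ F, m < k) :
    ∃ P : ℝ[X], P.coeff m = 1 ∧ (∀ k, k ≠ m → k ∉ F → P.coeff k = 0) ∧
      ∀ x ∈ Set.Icc (0 : ℝ) 1, |P.eval x| ≤ Real.exp (-∑ k ∈ F, 1 / ((k : ℝ) + 1)) := by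
  induction F using Finset.induction_on with
  | empty =>
    refine ⟨X ^ m, by simp, fun k hk _ => by simp [coeff_X_pow, hk], fun x hx => ?_⟩
    simpa [abs_of_nonneg hx.1] using pow_le_one₀ hx.1 hx.2
  | insert l F hlF ih =>
    obtain ⟨P, hPm, hP, hPB⟩ := ih fun k hk => hF k (Finset.mem_insert_of_mem hk)
    have hml : m < l := hF l (Finset.mem_insert_self l F)
    have hml' : (m : ℝ) + 1 ≤ l := by exact_mod_cast hml
    have hm' : (1 : ℝ) ≤ m := by exact_mod_cast hm
    have hl0 : (0 : ℝ) < l := by linarith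
    have hPl : P.coeff l = 0 := hP l hml.ne' hlF
    obtain ⟨R, hR⟩ := P.exists_coeff_eq_mul fun k => ((l : ℝ) - m) / (l - k)
    have hRl : R.coeff l = 0 := by simp [hR, hPl]
    set Q : ℝ[X] := R - C (R.eval 1) * X ^ l with hQ
    have hQc : ∀ k, k ≠ l → Q.coeff k = R.coeff k := fun k hk => by simp [hQ, coeff_X_pow, hk]
    have hP0 : P.coeff 0 = 0 :=
      hP 0 hm.ne fun h => by simpa using hF 0 (Finset.mem_insert_of_mem h)
    have hQ0 : Q.eval 0 = 0 := by
      rw [← coeff_zero_eq_eval_zero, hQc 0 (by omega), hR, hP0, mul_zero]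
    have hQ1 : Q.eval 1 = 0 := by simp [hQ]
    have hode : C (l : ℝ) * Q - X * derivative Q = C ((l : ℝ) - m) * P := by
      ext k
      rw [coeff_sub, coeff_C_mul, coeff_C_mul, coeff_X_mul_derivative]
      rcases eq_or_ne k l with rfl | hk
      · simp [hPl]
      · have : (l : ℝ) - k ≠ 0 := sub_ne_zero.mpr (by exact_mod_cast hk.symm)
        rw [hQc k hk, hR]
        field_simp
    refine ⟨Q, ?_, fun k hkm hk => ?_, fun x hx => ?_⟩
    · rw [hQc m hml.ne, hR, hPm, mul_one, div_self (by linarith)]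
    · rw [Finset.mem_insert, not_or] at hk
      rw [hQc k hk.1, hR, hP k hkm hk.2, mul_zero]
    · set E := Real.exp (-∑ k ∈ F, 1 / ((k : ℝ) + 1)) with hE
      have key := Q.mul_abs_eval_le_of_abs_le (B := ((l : ℝ) - m) * E) hl0 hQ0 hQ1
        (fun y hy => by
          have h := congrArg (eval y) hode
          simp only [eval_sub, eval_mul, eval_C, eval_X] at h
          rw [h, abs_mul, abs_of_nonneg (by linarith)]
          exact mul_le_mul_of_nonneg_left (hPB y hy) (by linarith)) hx
      have hexp : ((l : ℝ) - m) / l ≤ Real.exp (-(1 / ((l : ℝ) + 1))) := by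
        have h := Real.add_one_le_exp (-(1 / ((l : ℝ) + 1)))
        refine le_trans ?_ h
        rw [div_le_iff₀ hl0]
        have : 1 / ((l : ℝ) + 1) * l ≤ 1 := by
          rw [div_mul_eq_mul_div, one_mul]
          exact div_le_one_of_le₀ (by linarith) (by linarith)
        linarith
      rw [Finset.sum_insert hlF, neg_add, Real.exp_add, ← hE]
      calc |Q.eval x| ≤ ((l : ℝ) - m) * E / l := by
            rw [le_div_iff₀ hl0]; linarith
        _ = ((l : ℝ) - m) / l * E := by ring
        _ ≤ _ := mul_le_mul_of_nonneg_right hexp (Real.exp_pos _).le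

/-- The operator `x ^ k ↦ (k - l) / (k + l + 1) x ^ k` is a contraction of `L²[0,1]`; here it is
written as `(l + 1) R + x R' ↦ x R' - l R`. -/
theorem Polynomial.integral_sq_eval_le {P U R : ℝ[X]} {l : ℝ} (hl : 0 ≤ l)
    (hP : P = C (l + 1) * R + X * derivative R) (hU : U = X * derivative R - C l * R) :
    ∫ x in (0 : ℝ)..1, U.eval x ^ 2 ≤ ∫ x in (0 : ℝ)..1, P.eval x ^ 2 := by
  have hInt : ∀ Q : ℝ[X], IntervalIntegrable (fun x => Q.eval x) volume 0 1 :=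
    fun Q => Q.continuous.intervalIntegrable 0 1
  have hdiff : P ^ 2 - U ^ 2 = derivative (C (2 * l + 1) * (X * R ^ 2)) := by
    rw [hP, hU, derivative_C_mul, derivative_mul, derivative_X, derivative_pow]
    simp only [map_add, map_mul, map_one, map_ofNat, Nat.cast_ofNat]
    ring
  have hsub : ∫ x in (0 : ℝ)..1, (P ^ 2 - U ^ 2).eval x = (2 * l + 1) * R.eval 1 ^ 2 := by
    rw [hdiff, intervalIntegral.integral_eq_sub_of_hasDerivAt
      (fun x _ => (C (2 * l + 1) * (X * R ^ 2)).hasDerivAt x) (hInt _)]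
    simp
  have hsplit := intervalIntegral.integral_sub (hInt (P ^ 2)) (hInt (U ^ 2))
  simp only [← eval_sub, hsub] at hsplit
  simp only [eval_pow] at hsplit
  have : 0 ≤ (2 * l + 1) * R.eval 1 ^ 2 := by positivity
  linarith

theorem exp_le_sq_div {m l : ℕ} (h : m ≠ l) :
    Real.exp (-(2 * ((2 * m + 1) * (m + 2)) * (1 / ((l : ℝ) + 1)))) ≤
      (((m : ℝ) - l) / (m + l + 1)) ^ 2 := by
  have hd : 1 ≤ |(m : ℝ) - l| := by
    have : (1 : ℤ) ≤ |(m : ℤ) - l| := Int.one_le_abs (sub_ne_zero.mpr (by exact_mod_cast h))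
    exact_mod_cast this
  have h1 : (l : ℝ) + 1 ≤ |(m : ℝ) - l| * (m + 2) := by
    have := neg_abs_le ((m : ℝ) - l)
    nlinarith [Nat.cast_nonneg (α := ℝ) m]
  have h2 : (m : ℝ) + l + 1 ≤ |(m : ℝ) - l| + (2 * m + 1) := by
    have := neg_abs_le ((m : ℝ) - l)
    linarith
  set d := |(m : ℝ) - l|
  set c : ℝ := (2 * m + 1) * (m + 2) * (1 / ((l : ℝ) + 1)) with hc
  have hd0 : 0 < d := by linarith
  have h3 : (m + l + 1) / d ≤ Real.exp c := by
    refine le_trans ?_ (Real.add_one_le_exp c)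
    rw [div_le_iff₀ hd0]
    have : 2 * (m : ℝ) + 1 ≤ c * d := by
      rw [hc, mul_one_div, div_mul_eq_mul_div, le_div_iff₀ (by positivity)]
      nlinarith [Nat.cast_nonneg (α := ℝ) m]
    linarith
  have h4 : Real.exp (-c) ≤ d / (m + l + 1) := by
    rw [Real.exp_neg, ← inv_div]
    exact inv_anti₀ (by positivity) h3
  calc _ = Real.exp (-c) ^ 2 := by rw [← Real.exp_nat_mul, hc]; congr 1; push_cast; ring
    _ ≤ (d / (m + l + 1)) ^ 2 := pow_le_pow_left₀ (Real.exp_pos _).le h4 2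
    _ = _ := by rw [div_pow, div_pow, sq_abs]

/-- A lower bound for the `L²[0,1]` distance from `x ^ m` to the span of other powers. -/
theorem Polynomial.sq_coeff_mul_exp_le_integral {m : ℕ} (F : Finset ℕ) (hm : m ∉ F) (P : ℝ[X])
    (hP : ∀ k, k ≠ m → k ∉ F → P.coeff k = 0) :
    P.coeff m ^ 2 * Real.exp (-(2 * ((2 * m + 1) * (m + 2)) * ∑ k ∈ F, 1 / ((k : ℝ) + 1))) /
      (2 * m + 1) ≤ ∫ x in (0 : ℝ)..1, P.eval x ^ 2 := by
  induction F using Finset.induction_on generalizing P with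
  | empty =>
    have : P = C (P.coeff m) * X ^ m := by
      ext k
      rcases eq_or_ne k m with rfl | hk
      · simp
      · simp [hP k hk, coeff_X_pow, hk]
    rw [this]
    simp only [eval_mul, eval_C, eval_pow, eval_X, mul_pow, ← pow_mul,
      intervalIntegral.integral_const_mul, integral_pow]
    simp [mul_comm m 2, div_eq_mul_inv]
  | insert l F hlF ih =>
    rw [Finset.mem_insert, not_or] at hm
    obtain ⟨R, hR⟩ := P.exists_coeff_eq_mul fun k => ((k : ℝ) + l + 1)⁻¹
    set U : ℝ[X] := X * derivative R - C (l : ℝ) * R with hU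
    have hUc : ∀ k : ℕ, U.coeff k = ((k : ℝ) - l) / (k + l + 1) * P.coeff k := fun k => by
      rw [hU, coeff_sub, coeff_X_mul_derivative, coeff_C_mul, hR]; ring
    have hPR : P = C ((l : ℝ) + 1) * R + X * derivative R := by
      ext k
      rw [coeff_add, coeff_X_mul_derivative, coeff_C_mul, hR]
      have : (k : ℝ) + l + 1 ≠ 0 := by positivity
      field_simp
      ring
    have hle := integral_sq_eval_le l.cast_nonneg hPR hU
    refine le_trans ?_ ((ih hm.2 U fun k hkm hkF => ?_).trans hle)
    · rw [Finset.sum_insert hlF, mul_add, neg_add, Real.exp_add, hUc, mul_pow]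
      have := exp_le_sq_div hm.1
      rw [mul_comm (_ ^ 2) (P.coeff m ^ 2), ← mul_assoc]
      have := mul_le_mul_of_nonneg_left this (sq_nonneg (P.coeff m))
      gcongr
    · rw [hUc]
      rcases eq_or_ne k l with rfl | hk
      · simp
      · rw [hP k hkm (by simp [hk, hkF]), mul_zero]

theorem exists_polynomial_re_im_of_mem_span {S : Set ℕ} {f : C(Set.Icc (0 : ℝ) 1, ℂ)}
    (hf : f ∈ Submodule.span ℂ (monC '' S)) :
    ∃ P Q : ℝ[X], (∀ k ∉ S, P.coeff k = 0) ∧ (∀ k ∉ S, Q.coeff k = 0) ∧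
      ∀ x, (f x).re = P.eval (x : ℝ) ∧ (f x).im = Q.eval (x : ℝ) := by
  induction hf using Submodule.span_induction with
  | mem f hf =>
    obtain ⟨n, hn, rfl⟩ := hf
    refine ⟨X ^ n, 0, fun k hk => ?_, by simp, fun x => ?_⟩
    · rw [coeff_X_pow, if_neg]
      rintro rfl
      exact hk hn
    · simp [monC, ← Complex.ofReal_pow]
  | zero => exact ⟨0, 0, by simp, by simp, by simp⟩
  | add f g _ _ hf hg =>
    obtain ⟨P, Q, hP, hQ, h⟩ := hf
    obtain ⟨P', Q', hP', hQ', h'⟩ := hg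
    exact ⟨P + P', Q + Q', fun k hk => by simp [hP k hk, hP' k hk],
      fun k hk => by simp [hQ k hk, hQ' k hk], fun x => by simp [h x, h' x]⟩
  | smul a f _ hf =>
    obtain ⟨P, Q, hP, hQ, h⟩ := hf
    exact ⟨C a.re * P - C a.im * Q, C a.re * Q + C a.im * P,
      fun k hk => by simp [hP k hk, hQ k hk], fun k hk => by simp [hP k hk, hQ k hk],
      fun x => by simp [h x]⟩

theorem sum_smul_monC_mem_span {S : Set ℕ} {P : ℝ[X]} (hP : ∀ k ∉ S, P.coeff k = 0) :
    ∑ k ∈ P.support, (P.coeff k : ℂ) • monC k ∈ Submodule.span ℂ (monC '' S) := by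
  refine Submodule.sum_mem _ fun k hk => Submodule.smul_mem _ _ (Submodule.subset_span ⟨k, ?_, rfl⟩)
  by_contra h
  exact mem_support_iff.mp hk (hP k h)

theorem sum_smul_monC_apply (P : ℝ[X]) (x : Set.Icc (0 : ℝ) 1) :
    (∑ k ∈ P.support, (P.coeff k : ℂ) • monC k) x = ((P.eval (x : ℝ) : ℝ) : ℂ) := by
  rw [eval_eq_sum, Polynomial.sum]
  simp [monC]

theorem monC_mem_closure_span {S : Set ℕ} {m : ℕ} (hm : 0 < m)
    (hS : ¬ Summable (S.indicator fun n : ℕ => 1 / ((n : ℝ) + 1))) :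
    monC m ∈ (Submodule.span ℂ (monC '' S)).topologicalClosure := by
  by_cases hmS : m ∈ S
  · exact Submodule.le_topologicalClosure _ (Submodule.subset_span ⟨m, hmS, rfl⟩)
  refine Metric.mem_closure_iff.mpr fun ε hε => ?_
  have hnonneg : ∀ n, 0 ≤ S.indicator (fun n : ℕ => 1 / ((n : ℝ) + 1)) n :=
    fun n => Set.indicator_nonneg (fun k _ => by positivity) n
  have hlim := (not_summable_iff_tendsto_nat_atTop_of_nonneg hnonneg).mp hS
  obtain ⟨N, hN⟩ := (hlim.eventually_gt_atTop (-Real.log ε + (m + 1))).exists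
  classical
  set F := (Finset.range N).filter fun k => k ∈ S ∧ m < k with hFdef
  have hsum : ∑ n ∈ Finset.range N, S.indicator (fun n : ℕ => 1 / ((n : ℝ) + 1)) n ≤
      ∑ k ∈ F, 1 / ((k : ℝ) + 1) + (m + 1) := by
    have hle : ∑ n ∈ Finset.range N, S.indicator (fun n : ℕ => 1 / ((n : ℝ) + 1)) n ≤
        ∑ n ∈ F ∪ Finset.range (m + 1), S.indicator (fun n : ℕ => 1 / ((n : ℝ) + 1)) n := by
      rw [← Finset.sum_filter_ne_zero]
      refine Finset.sum_le_sum_of_subset_of_nonneg (fun n hn => ?_) fun n _ _ => hnonneg n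
      rw [Finset.mem_filter, Finset.mem_range] at hn
      have hnS : n ∈ S := Set.mem_of_indicator_ne_zero hn.2
      rw [Finset.mem_union, hFdef, Finset.mem_filter, Finset.mem_range, Finset.mem_range]
      by_cases hnm : m < n
      · exact Or.inl ⟨hn.1, hnS, hnm⟩
      · exact Or.inr (by omega)
    have hunion : ∑ n ∈ F ∪ Finset.range (m + 1),
          S.indicator (fun n : ℕ => 1 / ((n : ℝ) + 1)) n ≤
        ∑ n ∈ F, S.indicator (fun n : ℕ => 1 / ((n : ℝ) + 1)) n +
          ∑ n ∈ Finset.range (m + 1), S.indicator (fun n : ℕ => 1 / ((n : ℝ) + 1)) n := by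
      rw [← Finset.sum_union_inter]
      exact le_add_of_nonneg_right (Finset.sum_nonneg fun n _ => hnonneg n)
    have h1 : ∑ n ∈ F, S.indicator (fun n : ℕ => 1 / ((n : ℝ) + 1)) n =
        ∑ k ∈ F, 1 / ((k : ℝ) + 1) :=
      Finset.sum_congr rfl fun k hk =>
        Set.indicator_of_mem (Finset.mem_filter.mp hk).2.1 _
    have h2 : ∑ n ∈ Finset.range (m + 1), S.indicator (fun n : ℕ => 1 / ((n : ℝ) + 1)) n ≤
        m + 1 := by
      refine (Finset.sum_le_card_nsmul _ _ 1 fun n _ => ?_).trans (by simp)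
      refine Set.indicator_apply_le' (fun _ => ?_) fun _ => zero_le_one
      exact div_le_one_of_le₀ (by linarith [Nat.cast_nonneg (α := ℝ) n]) (by positivity)
    linarith
  obtain ⟨P, hPm, hP, hB⟩ := exists_polynomial_abs_eval_le_exp hm F
    fun k hk => (Finset.mem_filter.mp hk).2.2
  have hQ : ∀ k ∉ S, (X ^ m - P).coeff k = 0 := fun k hk => by
    rcases eq_or_ne k m with rfl | hkm
    · simp [hPm]
    · simp [coeff_X_pow, hkm, hP k hkm fun h => hk (Finset.mem_filter.mp h).2.1]
  refine ⟨_, sum_smul_monC_mem_span hQ, ?_⟩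
  rw [dist_eq_norm, ContinuousMap.norm_lt_iff _ hε]
  intro x
  have hx : (monC m - ∑ k ∈ (X ^ m - P).support, ((X ^ m - P).coeff k : ℂ) • monC k) x =
      ((P.eval (x : ℝ) : ℝ) : ℂ) := by
    rw [ContinuousMap.sub_apply, sum_smul_monC_apply]
    simp [monC]
  rw [hx, Complex.norm_real, Real.norm_eq_abs]
  refine (hB x x.2).trans_lt ?_
  rw [← Real.lt_log_iff_exp_lt hε]
  linarith

theorem dense_span_of_forall_monC_mem {V : Submodule ℂ C(Set.Icc (0 : ℝ) 1, ℂ)}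
    (hV : ∀ m, monC m ∈ V.topologicalClosure) :
    Dense (V : Set C(Set.Icc (0 : ℝ) 1, ℂ)) := by
  rw [Submodule.dense_iff_topologicalClosure_eq_top, eq_top_iff]
  have hreal : ∀ g : C(Set.Icc (0 : ℝ) 1, ℝ),
      (⟨fun x => (g x : ℂ), by fun_prop⟩ : C(Set.Icc (0 : ℝ) 1, ℂ)) ∈ V.topologicalClosure := by
    intro g
    refine V.isClosed_topologicalClosure.closure_subset (Metric.mem_closure_iff.mpr fun ε hε => ?_)
    obtain ⟨P, hP⟩ := exists_polynomial_near_continuousMap 0 1 g ε hε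
    refine ⟨∑ k ∈ P.support, (P.coeff k : ℂ) • monC k,
      Submodule.sum_mem _ fun k _ => Submodule.smul_mem _ _ (hV k), ?_⟩
    rw [dist_comm, dist_eq_norm, ContinuousMap.norm_lt_iff _ hε]
    intro x
    rw [ContinuousMap.sub_apply, sum_smul_monC_apply, ContinuousMap.coe_mk,
      ← Complex.ofReal_sub, Complex.norm_real]
    exact ((P.toContinuousMapOn _ - g).norm_coe_le_norm x).trans_lt hP
  intro f _
  have hf : f = (⟨fun x => ((f x).re : ℂ), by fun_prop⟩ : C(Set.Icc (0 : ℝ) 1, ℂ)) +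
      Complex.I • (⟨fun x => ((f x).im : ℂ), by fun_prop⟩ : C(Set.Icc (0 : ℝ) 1, ℂ)) := by
    ext x
    simp [mul_comm Complex.I, Complex.re_add_im]
  rw [hf]
  exact Submodule.add_mem _ (hreal ⟨fun x => (f x).re, by fun_prop⟩)
    (Submodule.smul_mem _ _ (hreal ⟨fun x => (f x).im, by fun_prop⟩))

theorem zero_mem_of_dense_span_monC {S : Set ℕ}
    (h : Dense (Submodule.span ℂ (monC '' S) : Set C(Set.Icc (0 : ℝ) 1, ℂ))) : 0 ∈ S := by
  by_contra h0
  obtain ⟨f, hf, hdist⟩ := h.exists_dist_lt 1 one_pos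
  obtain ⟨P, Q, hP, hQ, hfx⟩ := exists_polynomial_re_im_of_mem_span hf
  set o : Set.Icc (0 : ℝ) 1 := ⟨0, by simp⟩
  have hfo : f o = 0 := Complex.ext
    (by rw [(hfx o).1, ← coeff_zero_eq_eval_zero, hP 0 h0, Complex.zero_re])
    (by rw [(hfx o).2, ← coeff_zero_eq_eval_zero, hQ 0 h0, Complex.zero_im])
  have := (ContinuousMap.dist_apply_le_dist (f := 1) (g := f) o).trans_lt hdist
  simp [hfo] at this

theorem not_summable_of_dense_span_monC {S : Set ℕ}
    (h : Dense (Submodule.span ℂ (monC '' S) : Set C(Set.Icc (0 : ℝ) 1, ℂ))) :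
    ¬ Summable (S.indicator fun n : ℕ => 1 / ((n : ℝ) + 1)) := by
  intro hsum
  obtain ⟨m, hm⟩ : ∃ m, m ∉ S := by
    by_contra! hall
    rw [Set.eq_univ_of_forall hall, Set.indicator_univ] at hsum
    refine Real.not_summable_one_div_natCast ((summable_nat_add_iff 1).mp ?_)
    simpa using hsum
  set c : ℝ := 2 * ((2 * m + 1) * (m + 2))
  set M := ∑' n, S.indicator (fun n : ℕ => 1 / ((n : ℝ) + 1)) n
  set δ := Real.exp (-(c * M)) / (2 * m + 1) with hδ
  have hδ0 : 0 < δ := by positivity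
  obtain ⟨f, hf, hdist⟩ := h.exists_dist_lt (monC m) (Real.sqrt_pos.mpr hδ0)
  obtain ⟨P, Q, hP, -, hfx⟩ := exists_polynomial_re_im_of_mem_span hf
  have hPS : ∀ k ∈ P.support, k ∈ S := fun k hk => by
    by_contra hkS
    exact mem_support_iff.mp hk (hP k hkS)
  have hlow := (X ^ m - P).sq_coeff_mul_exp_le_integral P.support (fun hk => hm (hPS m hk))
    fun k hkm hk => by simp [coeff_X_pow, hkm, notMem_support_iff.mp hk]
  have hpart : ∑ k ∈ P.support, 1 / ((k : ℝ) + 1) ≤ M := by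
    refine (Finset.sum_congr rfl fun k hk => (Set.indicator_of_mem (hPS k hk)
      fun n : ℕ => 1 / ((n : ℝ) + 1)).symm).trans_le ?_
    exact hsum.sum_le_tsum _ fun n _ => Set.indicator_nonneg (fun k _ => by positivity) n
  have hlow' : δ ≤ ∫ x in (0 : ℝ)..1, (X ^ m - P).eval x ^ 2 := by
    refine le_trans ?_ hlow
    rw [coeff_sub, coeff_X_pow_self, hP m hm, sub_zero, one_pow, one_mul, hδ]
    gcongr
  have hpt : ∀ x ∈ Set.Icc (0 : ℝ) 1, (X ^ m - P).eval x ^ 2 ≤ dist (monC m) f ^ 2 := by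
    intro x hx
    have h1 : (monC m ⟨x, hx⟩ - f ⟨x, hx⟩).re = (X ^ m - P).eval x := by
      rw [Complex.sub_re, (hfx _).1]
      simp [monC, ← Complex.ofReal_pow]
    rw [← h1, ← sq_abs]
    refine pow_le_pow_left₀ (abs_nonneg _) ((Complex.abs_re_le_norm _).trans ?_) 2
    rw [← dist_eq_norm]
    exact ContinuousMap.dist_apply_le_dist _
  have hup : ∫ x in (0 : ℝ)..1, (X ^ m - P).eval x ^ 2 ≤ dist (monC m) f ^ 2 := by
    have := intervalIntegral.integral_mono_on (μ := volume) zero_le_one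
      (((X ^ m - P).continuous.pow 2).intervalIntegrable 0 1)
      (continuous_const.intervalIntegrable 0 1) hpt
    simpa using this
  have hlt : dist (monC m) f ^ 2 < δ := by
    rwa [← Real.lt_sqrt dist_nonneg]
  linarith

end Polynomials

theorem tsum_one_div_eq_top_iff (S : Set ℕ) :
    ∑' n : S, (1 : ENNReal) / ((n : ℕ) + 1) = ⊤ ↔
      ¬ Summable (S.indicator fun n : ℕ => 1 / ((n : ℝ) + 1)) := by
  rw [← summable_subtype_iff_indicator, iff_not_comm, ← ne_eq]
  have : ∀ n : S, (1 : ENNReal) / ((n : ℕ) + 1) = ((1 / ((n : ℕ) + 1) : NNReal) : ENNReal) :=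
    fun n => by rw [ENNReal.coe_div (by positivity)]; push_cast; rfl
  simp_rw [this, ENNReal.tsum_coe_ne_top_iff_summable]
  rw [← NNReal.summable_coe]
  push_cast
  rfl

/-- **Müntz–Szász theorem, continuous case.** Let `S ⊆ ℕ`.  The linear span of the
monomials `{xⁿ : n ∈ S}` is dense in `C([0,1], ℂ)` (with the supremum norm) if and
only if `0 ∈ S` and `∑_{n ∈ S} 1/(n+1) = ∞`. -/
theorem muntz_szasz_continuous (S : Set ℕ) :
    Dense (Submodule.span ℂ (monC '' S) : Set C(Set.Icc (0 : ℝ) 1, ℂ)) ↔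
      0 ∈ S ∧ ∑' n : S, (1 : ENNReal) / ((n : ℕ) + 1) = ⊤ := by
  rw [tsum_one_div_eq_top_iff]
  refine ⟨fun h => ⟨zero_mem_of_dense_span_monC h, not_summable_of_dense_span_monC h⟩,
    fun ⟨h0, hS⟩ => dense_span_of_forall_monC_mem fun m => ?_⟩
  rcases m.eq_zero_or_pos with rfl | hm
  · exact Submodule.le_topologicalClosure _ (Submodule.subset_span ⟨0, h0, rfl⟩)
  · exact monC_mem_closure_span hm hS
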